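/- arXiv:2206.12620 — 4 statements merged into one kernel-verified Lean document; each statement's English description precedes it below -/
import Mathlib

section
/- Let u0 : [0,∞) → ℝ be nonnegative, right-continuous, of locally bounded variation, bounded with supremum ‖u0‖_∞, and suppose there exists α > 0 with u0(t) ≥ α for all t ∈ [0,α). If ℓ : [0,∞) → ℝ satisfies the nonlocal free-boundary equation ℓ(t) = u0(t) + |{ s ∈ [0,t] : ℓ(t−s) > s }| for every t ∈ [0,∞), then ℓ(t) ≤ ‖u0‖_∞ + t for all t ∈ [0,∞), and moreover ℓ(t) = u0(t) + t for every t ∈ [0,α). -/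
open MeasureTheory Set

/-!
The set measured in the equation lies in `[0, t]`, so `u0 t ≤ ℓ t ≤ u0 t + t` for every solution.
If `α ≤ r + u0 r` for all `r ∈ [0, α)`, the lower bound gives `ℓ r > t - r` for `0 ≤ r ≤ t < α`.
With `r = t - s` this says that every `s ∈ [0, t]` belongs to the measured set, whose measure is
then exactly `t`.
-/

/-- The set of times `s ∈ [0, t]` with `ℓ (t - s) > s`, whose Lebesgue measure is the nonlocal term
of the free-boundary equation at time `t`. -/
def activeSet (ℓ : ℝ → ℝ) (t : ℝ) : Set ℝ :=
  {s | s ∈ Icc 0 t ∧ ℓ (t - s) > s}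

/-- `ℓ` solves the nonlocal free-boundary equation with datum `u0`. Functions on `[0, ∞)` are
encoded as functions on `ℝ` whose values at negative times play no role. -/
def IsFreeBoundarySolution (u0 ℓ : ℝ → ℝ) : Prop :=
  ∀ t ≥ (0 : ℝ), ℓ t = u0 t + volume.real (activeSet ℓ t)

section activeSet

variable {ℓ : ℝ → ℝ} {t : ℝ}

theorem activeSet_subset_Icc : activeSet ℓ t ⊆ Icc 0 t :=
  fun _ hs ↦ hs.1

theorem volume_real_activeSet_le (ht : 0 ≤ t) : volume.real (activeSet ℓ t) ≤ t :=
  calc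
    volume.real (activeSet ℓ t) ≤ volume.real (Icc 0 t) :=
      measureReal_mono activeSet_subset_Icc measure_Icc_lt_top.ne
    _ = t := by rw [Real.volume_real_Icc_of_le ht, sub_zero]

theorem activeSet_eq_Icc (h : ∀ r ∈ Icc 0 t, t < r + ℓ r) : activeSet ℓ t = Icc 0 t := by
  refine activeSet_subset_Icc.antisymm fun s hs ↦ ⟨hs, ?_⟩
  have h_reflected : t < t - s + ℓ (t - s) :=
    h (t - s) ⟨sub_nonneg.2 hs.2, sub_le_self t hs.1⟩
  linarith

end activeSet

namespace IsFreeBoundarySolution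

variable {u0 ℓ : ℝ → ℝ} {t : ℝ}

theorem datum_le (hℓ : IsFreeBoundarySolution u0 ℓ) (ht : 0 ≤ t) : u0 t ≤ ℓ t := by
  rw [hℓ t ht]
  exact le_add_of_nonneg_right measureReal_nonneg

theorem le_datum_add (hℓ : IsFreeBoundarySolution u0 ℓ) (ht : 0 ≤ t) : ℓ t ≤ u0 t + t := by
  rw [hℓ t ht]
  gcongr
  exact volume_real_activeSet_le ht

theorem eq_datum_add (hℓ : IsFreeBoundarySolution u0 ℓ) (ht : 0 ≤ t)
    (hu0 : ∀ r ∈ Icc 0 t, t < r + u0 r) : ℓ t = u0 t + t := by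
  have h_active : activeSet ℓ t = Icc 0 t :=
    activeSet_eq_Icc fun r hr ↦ (hu0 r hr).trans_le (by gcongr; exact hℓ.datum_le hr.1)
  rw [hℓ t ht, h_active, Real.volume_real_Icc_of_le ht, sub_zero]

end IsFreeBoundarySolution

theorem mancala_freeBoundary_upperBound_and_initial_formula_general
    {u0 ℓ : ℝ → ℝ} {α : ℝ} (hℓ : IsFreeBoundarySolution u0 ℓ)
    (hu0 : ∀ r ∈ Ico 0 α, α ≤ r + u0 r) :
    (∀ t ≥ (0 : ℝ), ℓ t ≤ u0 t + t) ∧ (∀ t ∈ Ico (0 : ℝ) α, ℓ t = u0 t + t) :=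
  ⟨fun _ ht ↦ hℓ.le_datum_add ht, fun _ ht ↦ hℓ.eq_datum_add ht.1 fun r hr ↦
    ht.2.trans_le (hu0 r ⟨hr.1, hr.2.trans_lt ht.2⟩)⟩

/-- Upper bound `ℓ(t) ≤ ‖u0‖_∞ + t` and the explicit formula
`ℓ(t) = u0(t) + t` on `[0,α)`, for any solution of the nonlocal free-boundary
equation with bounded datum `u0` satisfying `u0 ≥ α > 0` on `[0,α)`.
Here `Msup` is the supremum of `u0` over `[0,∞)`. -/
theorem mancala_freeBoundary_upperBound_and_initial_formula
    (u0 : ℝ → ℝ)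
    (hu0_nonneg : ∀ t ≥ (0 : ℝ), 0 ≤ u0 t)
    (hu0_rc : ∀ t ≥ (0 : ℝ), ContinuousWithinAt u0 (Set.Ici t) t)
    (hu0_bv : ∀ a > (0 : ℝ), BoundedVariationOn u0 (Set.Icc 0 a))
    (Msup : ℝ)
    (hMsup : IsLUB (u0 '' Set.Ici (0 : ℝ)) Msup)
    (α : ℝ) (hα : 0 < α)
    (hu0_pos : ∀ t ∈ Set.Ico (0 : ℝ) α, α ≤ u0 t)
    (ℓ : ℝ → ℝ)
    (hℓ : ∀ t ≥ (0 : ℝ),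
      ℓ t = u0 t + (volume {s : ℝ | s ∈ Set.Icc 0 t ∧ ℓ (t - s) > s}).toReal) :
    (∀ t ≥ (0 : ℝ), ℓ t ≤ Msup + t) ∧
    (∀ t ∈ Set.Ico (0 : ℝ) α, ℓ t = u0 t + t) := by
  have h_general := mancala_freeBoundary_upperBound_and_initial_formula_general hℓ
    fun r hr ↦ (hu0_pos r hr).trans (le_add_of_nonneg_left hr.1)
  exact ⟨fun t ht ↦ (h_general.1 t ht).trans (add_le_add_left (hMsup.1 ⟨t, ht, rfl⟩) t),
    h_general.2⟩
end

section
/- Let u0 : [0,∞) → ℝ be nonnegative, right-continuous, of locally bounded variation, and suppose there exists α > 0 with u0(t) ≥ α for all t ∈ [0,α). Then a function ℓ : [0,∞) → ℝ of locally bounded variation satisfies the nonlocal free-boundary equation ℓ(t) = u0(t) + |{ s ∈ [0,t] : ℓ(t−s) > s }| for every t ∈ [0,∞) if and only if ℓ(t) = u0(t) + t for every t ∈ [0,α) and ℓ(t) = u0(t) + α + |{ s ∈ [α,t] : ℓ(t−s) > s }| for every t ∈ [α,∞). -/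
open MeasureTheory Set

/-!
Both formulations force `α ≤ ℓ` on `[0, ∞)`, and then every delay `s < α` satisfies
`ℓ (t - s) > s`, so that the delays in `[0, α)` contribute exactly `min t α` to the nonlocal term.

For the equation itself, the bound `α ≤ ℓ` propagates from `[0, T)` to `[T, T + α)` by using the
equation twice. At `t ∈ [T, T + α)` the delays in `(t - T, α)` only look back into `[0, T)`, whence
the provisional bound `ℓ t ≥ T + α - t`. This bound is just strong enough to make the delays in
`[0, t - T]` count as well, and the second use of the equation gives `ℓ t ≥ α`.
-/

/-- The set of delays `s ∈ [a, t]` with `ℓ (t - s) > s`, whose Lebesgue measure is the nonlocal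
term of the free-boundary equation (`a = 0`) and of its translated form (`a = α`). -/
def delaySet (ℓ : ℝ → ℝ) (a t : ℝ) : Set ℝ :=
  {s | s ∈ Icc a t ∧ ℓ (t - s) > s}

section DelaySet

variable {ℓ : ℝ → ℝ} {a b c t : ℝ}

lemma delaySet_subset_Icc : delaySet ℓ a t ⊆ Icc a t :=
  fun _ hs => hs.1

lemma volume_delaySet_ne_top : volume (delaySet ℓ a t) ≠ ⊤ :=
  measure_ne_top_of_subset delaySet_subset_Icc measure_Icc_lt_top.ne

lemma delaySet_eq_Icc (h : ∀ r ∈ Icc 0 (t - a), t < r + ℓ r) : delaySet ℓ a t = Icc a t := by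
  refine delaySet_subset_Icc.antisymm fun s hs => ⟨hs, ?_⟩
  have := h (t - s) ⟨by linarith [hs.2], by linarith [hs.1]⟩
  linarith

lemma Ico_subset_delaySet (hbt : b ≤ t) (h : ∀ r ∈ Ioc (t - b) (t - a), t < r + ℓ r) :
    Ico a b ⊆ delaySet ℓ a t := by
  intro s hs
  have := h (t - s) ⟨by linarith [hs.2], by linarith [hs.1]⟩
  exact ⟨⟨hs.1, hs.2.le.trans hbt⟩, by linarith⟩

lemma sub_le_volume_real_delaySet (h : Ioo b c ⊆ delaySet ℓ a t) :
    c - b ≤ volume.real (delaySet ℓ a t) :=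
  calc c - b ≤ volume.real (Ioo b c) := by simp
    _ ≤ volume.real (delaySet ℓ a t) := measureReal_mono h volume_delaySet_ne_top

lemma delaySet_eq_Ico_union (hab : a ≤ b) (h : Ico a b ⊆ delaySet ℓ a t) :
    delaySet ℓ a t = Ico a b ∪ delaySet ℓ b t := by
  ext s
  constructor
  · intro hs
    exact (lt_or_ge s b).imp (fun hsb => ⟨hs.1.1, hsb⟩) fun hbs => ⟨⟨hbs, hs.1.2⟩, hs.2⟩
  · rintro (hs | hs)
    · exact h hs
    · exact ⟨⟨hab.trans hs.1.1, hs.1.2⟩, hs.2⟩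

lemma volume_real_delaySet_eq_add (hab : a ≤ b) (h : Ico a b ⊆ delaySet ℓ a t) :
    volume.real (delaySet ℓ a t) = b - a + volume.real (delaySet ℓ b t) := by
  have disjoint_delays : Disjoint (delaySet ℓ b t) (Ico a b) :=
    disjoint_left.2 fun _ hs hs' => hs.1.1.not_gt hs'.2
  rw [delaySet_eq_Ico_union hab h, union_comm,
    measureReal_union disjoint_delays measurableSet_Ico volume_delaySet_ne_top
      measure_Ico_lt_top.ne,
    Real.volume_real_Ico_of_le hab, add_comm]

end DelaySet

section LowerBound

variable {ℓ : ℝ → ℝ} {α T t : ℝ}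

lemma volume_real_delaySet_zero_of_lt (hℓ : ∀ r ≥ 0, α ≤ ℓ r) (ht : t ∈ Ico 0 α) :
    volume.real (delaySet ℓ 0 t) = t := by
  rw [delaySet_eq_Icc fun r hr => by linarith [hℓ r hr.1, hr.1, ht.2],
    Real.volume_real_Icc_of_le ht.1, sub_zero]

lemma volume_real_delaySet_zero_of_le (hα : 0 ≤ α) (hℓ : ∀ r ≥ 0, α ≤ ℓ r) (ht : α ≤ t) :
    volume.real (delaySet ℓ 0 t) = α + volume.real (delaySet ℓ α t) := by
  have short_delays : Ico 0 α ⊆ delaySet ℓ 0 t :=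
    Ico_subset_delaySet ht fun r hr => by linarith [hℓ r (by linarith [hr.1]), hr.1]
  rw [volume_real_delaySet_eq_add hα short_delays, sub_zero]

lemma sub_le_of_volume_real_delaySet_le (hαT : α ≤ T) (hℓT : ∀ r ∈ Ico 0 T, α ≤ ℓ r) (hTt : T ≤ t)
    (ht : volume.real (delaySet ℓ 0 t) ≤ ℓ t) : T + α - t ≤ ℓ t := by
  have old_delays : Ioo (t - T) α ⊆ delaySet ℓ 0 t := by
    intro s ⟨hTs, hsα⟩
    have : α ≤ ℓ (t - s) := hℓT _ ⟨by linarith, by linarith⟩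
    exact ⟨⟨by linarith, by linarith⟩, by linarith⟩
  linarith [sub_le_volume_real_delaySet old_delays]

lemma le_on_Ico_add_of_volume_real_delaySet_le (hαT : α ≤ T) (hℓT : ∀ r ∈ Ico 0 T, α ≤ ℓ r)
    (hℓ : ∀ t ≥ T, volume.real (delaySet ℓ 0 t) ≤ ℓ t) : ∀ t ∈ Ico 0 (T + α), α ≤ ℓ t := by
  intro t ht
  rcases lt_or_ge t T with htT | hTt
  · exact hℓT t ⟨ht.1, htT⟩
  have short_delays : Ico 0 α ⊆ delaySet ℓ 0 t := by
    refine Ico_subset_delaySet (hαT.trans hTt) fun r hr => ?_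
    rcases lt_or_ge r T with hrT | hTr
    · linarith [hℓT r ⟨by linarith [hr.1], hrT⟩, hr.1]
    · linarith [sub_le_of_volume_real_delaySet_le hαT hℓT hTr (hℓ r hTr), ht.2]
  linarith [sub_le_volume_real_delaySet (Ioo_subset_Ico_self.trans short_delays), hℓ t hTt]

lemma le_of_volume_real_delaySet_le (hα : 0 < α) (hℓα : ∀ t ∈ Ico 0 α, α ≤ ℓ t)
    (hℓ : ∀ t ≥ α, volume.real (delaySet ℓ 0 t) ≤ ℓ t) : ∀ t ≥ 0, α ≤ ℓ t := by
  have le_on_Ico_mul (n : ℕ) : ∀ t ∈ Ico 0 ((n + 1) * α), α ≤ ℓ t := by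
    induction n with
    | zero => simpa using hℓα
    | succ n ih =>
      have hαT : α ≤ (n + 1) * α := le_mul_of_one_le_left hα.le (by simp)
      rw [Nat.cast_succ, add_one_mul (n + 1 : ℝ)]
      exact le_on_Ico_add_of_volume_real_delaySet_le hαT ih fun t ht => hℓ t (hαT.trans ht)
  intro t ht
  obtain ⟨n, hn⟩ := exists_nat_gt (t / α)
  rw [div_lt_iff₀ hα] at hn
  exact le_on_Ico_mul n t ⟨ht, by linarith⟩

end LowerBound

section FreeBoundary

variable {u0 ℓ : ℝ → ℝ} {α : ℝ}

lemma freeBoundary_iff_translated_of_le (hα : 0 ≤ α) (hℓ : ∀ t ≥ 0, α ≤ ℓ t) :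
    (∀ t ≥ 0, ℓ t = u0 t + volume.real (delaySet ℓ 0 t)) ↔
      (∀ t ∈ Ico 0 α, ℓ t = u0 t + t) ∧
        ∀ t ∈ Ici α, ℓ t = u0 t + α + volume.real (delaySet ℓ α t) := by
  constructor
  · refine fun h => ⟨fun t ht => ?_, fun t ht => ?_⟩
    · rw [h t ht.1, volume_real_delaySet_zero_of_lt hℓ ht]
    · rw [h t (hα.trans ht), volume_real_delaySet_zero_of_le hα hℓ ht, add_assoc]
  · rintro ⟨h_before, h_after⟩ t ht
    rcases lt_or_ge t α with htα | hαt
    · rw [h_before t ⟨ht, htα⟩, volume_real_delaySet_zero_of_lt hℓ ⟨ht, htα⟩]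
    · rw [h_after t hαt, volume_real_delaySet_zero_of_le hα hℓ hαt, add_assoc]

lemma le_of_freeBoundary (hu0_nonneg : ∀ t ≥ α, 0 ≤ u0 t) (hα : 0 < α)
    (hu0_pos : ∀ t ∈ Ico 0 α, α ≤ u0 t)
    (h : ∀ t ≥ 0, ℓ t = u0 t + volume.real (delaySet ℓ 0 t)) : ∀ t ≥ 0, α ≤ ℓ t := by
  refine le_of_volume_real_delaySet_le hα (fun t ht => ?_) fun t ht => ?_
  · exact (hu0_pos t ht).trans (h t ht.1 ▸ le_add_of_nonneg_right measureReal_nonneg)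
  · exact (le_add_of_nonneg_left (hu0_nonneg t ht)).trans_eq (h t (hα.le.trans ht)).symm

lemma le_of_translated (hu0_nonneg : ∀ t ≥ α, 0 ≤ u0 t) (hu0_pos : ∀ t ∈ Ico 0 α, α ≤ u0 t)
    (h_before : ∀ t ∈ Ico 0 α, ℓ t = u0 t + t)
    (h_after : ∀ t ∈ Ici α, ℓ t = u0 t + α + volume.real (delaySet ℓ α t)) :
    ∀ t ≥ 0, α ≤ ℓ t := by
  intro t ht
  rcases lt_or_ge t α with htα | hαt
  · linarith [h_before t ⟨ht, htα⟩, hu0_pos t ⟨ht, htα⟩]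
  · linarith [h_after t hαt, hu0_nonneg t hαt,
      measureReal_nonneg (μ := volume) (s := delaySet ℓ α t)]

theorem mancala_freeBoundary_translated_formulation_general (hu0_nonneg : ∀ t ≥ 0, 0 ≤ u0 t)
    (hα : 0 < α) (hu0_pos : ∀ t ∈ Ico 0 α, α ≤ u0 t) :
    (∀ t ≥ 0, ℓ t = u0 t + volume.real (delaySet ℓ 0 t)) ↔
      (∀ t ∈ Ico 0 α, ℓ t = u0 t + t) ∧
        ∀ t ∈ Ici α, ℓ t = u0 t + α + volume.real (delaySet ℓ α t) := by
  have hu0_nonneg_after : ∀ t ≥ α, 0 ≤ u0 t := fun t ht => hu0_nonneg t (hα.le.trans ht)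
  constructor
  · intro h
    have hℓ := le_of_freeBoundary hu0_nonneg_after hα hu0_pos h
    exact (freeBoundary_iff_translated_of_le hα.le hℓ).1 h
  · intro h
    have hℓ := le_of_translated hu0_nonneg_after hu0_pos h.1 h.2
    exact (freeBoundary_iff_translated_of_le hα.le hℓ).2 h

end FreeBoundary

/-- A locally-BV function `ℓ` solves the nonlocal free-boundary
equation iff `ℓ(t) = u0(t) + t` on `[0,α)` and
`ℓ(t) = u0(t) + α + |{ s ∈ [α,t] : ℓ(t−s) > s }|` on `[α,∞)`. -/
theorem mancala_freeBoundary_translated_formulation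
    (u0 : ℝ → ℝ)
    (hu0_nonneg : ∀ t ≥ (0 : ℝ), 0 ≤ u0 t)
    (hu0_rc : ∀ t ≥ (0 : ℝ), ContinuousWithinAt u0 (Set.Ici t) t)
    (hu0_bv : ∀ a > (0 : ℝ), BoundedVariationOn u0 (Set.Icc 0 a))
    (α : ℝ) (hα : 0 < α)
    (hu0_pos : ∀ t ∈ Set.Ico (0 : ℝ) α, α ≤ u0 t)
    (ℓ : ℝ → ℝ)
    (hℓ_bv : ∀ a > (0 : ℝ), BoundedVariationOn ℓ (Set.Icc 0 a)) :
    (∀ t ≥ (0 : ℝ),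
      ℓ t = u0 t + (volume {s : ℝ | s ∈ Set.Icc 0 t ∧ ℓ (t - s) > s}).toReal)
    ↔
    ((∀ t ∈ Set.Ico (0 : ℝ) α, ℓ t = u0 t + t) ∧
     (∀ t ∈ Set.Ici α,
       ℓ t = u0 t + α
         + (volume {s : ℝ | s ∈ Set.Icc α t ∧ ℓ (t - s) > s}).toReal)) :=
  mancala_freeBoundary_translated_formulation_general hu0_nonneg hα hu0_pos
end

section
/- Let u0₁, u0₂ : [0,∞) → ℝ be nonnegative, right-continuous, of locally bounded variation, both satisfying the positivity condition for some α > 0 (u0ᵢ(t) ≥ α for all t ∈ [0,α)), and let ℓ₁, ℓ₂ be the corresponding solutions of the nonlocal free-boundary equation ℓᵢ(t) = u0ᵢ(t) + |{ s ∈ [0,t] : ℓᵢ(t−s) > s }| for all t ≥ 0. If u0₁(t) ≤ u0₂(t) for all t ≥ 0, then ℓ₁(t) ≤ ℓ₂(t) for all t ≥ 0. -/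
open MeasureTheory Set

/-!
On the right-hand side of the equation at time `t`, the values of `ℓ` at times after `t - δ` enter
only through `s < δ`, where the condition `ℓ (t - s) > s` holds automatically if `δ ≤ ℓ`. So a
comparison can be propagated in time steps of length `δ`, provided that `ℓ₂` stays away from `0`.
To obtain this, replace the subsolution `ℓ₁` by `max ℓ₁ α`: the positivity condition makes
the constant `α` a subsolution for the larger datum, and a maximum of subsolutions is a subsolution.
A comparison up to time `t - δ` bounds `max ℓ₁ α` by `ℓ₂ + δ` up to time `t`; taking `δ = α / 2`
yields `δ ≤ ℓ₂` up to time `t`, which removes the error `δ`.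
-/

/-- The set of delays `s ∈ [0, t]` for which the boundary `ℓ`, at time `t - s`, lies beyond `s`. -/
def freeBoundarySet (ℓ : ℝ → ℝ) (t : ℝ) : Set ℝ :=
  {s | s ∈ Icc 0 t ∧ ℓ (t - s) > s}

/-- The nonlocal term of the free-boundary equation; an outer measure when the set is not
measurable. -/
noncomputable def freeBoundaryTerm (ℓ : ℝ → ℝ) (t : ℝ) : ℝ :=
  volume.real (freeBoundarySet ℓ t)

/-- Subsolutions of the free-boundary equation with datum `u`; as in the equation itself,
negative times are left unconstrained. -/
def IsFreeBoundarySubsolution (u ℓ : ℝ → ℝ) : Prop :=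
  ∀ t ≥ 0, ℓ t ≤ u t + freeBoundaryTerm ℓ t

/-- Supersolutions of the free-boundary equation with datum `u`; as in the equation itself,
negative times are left unconstrained. -/
def IsFreeBoundarySupersolution (u ℓ : ℝ → ℝ) : Prop :=
  ∀ t ≥ 0, u t + freeBoundaryTerm ℓ t ≤ ℓ t

theorem forall_nonneg_of_forall_le_sub {G : Type*} [AddCommGroup G] [LinearOrder G]
    [IsOrderedAddMonoid G] [Archimedean G] {P : G → Prop} {δ : G} (hδ : 0 < δ)
    (step : ∀ t ≥ 0, (∀ r ≥ 0, r ≤ t - δ → P r) → P t) : ∀ t ≥ 0, P t := by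
  have lt_nsmul (n : ℕ) : ∀ t ≥ 0, t < n • δ → P t := by
    induction n with
    | zero => exact fun t ht hlt => absurd (zero_nsmul δ ▸ hlt) ht.not_gt
    | succ n ih =>
      intro t ht hlt
      refine step t ht fun r hr hrt => ih r hr (hrt.trans_lt ?_)
      rwa [sub_lt_iff_lt_add, ← succ_nsmul]
  intro t ht
  obtain ⟨n, hn⟩ := exists_lt_nsmul hδ t
  exact lt_nsmul n t ht hn

section

variable {u v ℓ ℓ₁ ℓ₂ : ℝ → ℝ} {t δ ε α : ℝ}

theorem freeBoundarySet_subset_Icc : freeBoundarySet ℓ t ⊆ Icc 0 t :=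
  fun _ hs => hs.1

theorem volume_freeBoundarySet_ne_top : volume (freeBoundarySet ℓ t) ≠ ⊤ :=
  measure_ne_top_of_subset freeBoundarySet_subset_Icc measure_Icc_lt_top.ne

theorem freeBoundarySet_mono (h : ℓ₁ ≤ ℓ₂) : freeBoundarySet ℓ₁ t ⊆ freeBoundarySet ℓ₂ t :=
  fun s hs => ⟨hs.1, hs.2.trans_le (h (t - s))⟩

theorem freeBoundarySet_subset_union_Ico (h : ∀ r ≥ 0, r ≤ t - δ → ℓ₁ r ≤ ℓ₂ r) :
    freeBoundarySet ℓ₁ t ⊆ freeBoundarySet ℓ₂ t ∪ Ico 0 δ := by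
  rintro s ⟨hst, hs⟩
  rcases lt_or_ge s δ with hsδ | hδs
  · exact Or.inr ⟨hst.1, hsδ⟩
  · exact Or.inl ⟨hst, hs.trans_le (h _ (sub_nonneg.2 hst.2) (by gcongr))⟩

theorem freeBoundarySet_subset_of_le (h : ∀ r ≥ 0, r ≤ t - δ → ℓ₁ r ≤ ℓ₂ r)
    (hδ : ∀ r ≥ 0, r ≤ t → δ ≤ ℓ₂ r) : freeBoundarySet ℓ₁ t ⊆ freeBoundarySet ℓ₂ t := by
  intro s hs
  rcases freeBoundarySet_subset_union_Ico h hs with hs₂ | hsδ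
  · exact hs₂
  · have hst := hs.1
    exact ⟨hst, hsδ.2.trans_le (hδ _ (sub_nonneg.2 hst.2) (sub_le_self t hst.1))⟩

theorem freeBoundaryTerm_le_of_subset (h : freeBoundarySet ℓ₁ t ⊆ freeBoundarySet ℓ₂ t) :
    freeBoundaryTerm ℓ₁ t ≤ freeBoundaryTerm ℓ₂ t :=
  measureReal_mono h volume_freeBoundarySet_ne_top

theorem freeBoundaryTerm_le_add (hδ : 0 ≤ δ) (h : ∀ r ≥ 0, r ≤ t - δ → ℓ₁ r ≤ ℓ₂ r) :
    freeBoundaryTerm ℓ₁ t ≤ freeBoundaryTerm ℓ₂ t + δ :=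
  calc
    freeBoundaryTerm ℓ₁ t ≤ volume.real (freeBoundarySet ℓ₂ t ∪ Ico 0 δ) :=
      measureReal_mono (freeBoundarySet_subset_union_Ico h)
        (measure_union_ne_top volume_freeBoundarySet_ne_top measure_Ico_lt_top.ne)
    _ ≤ freeBoundaryTerm ℓ₂ t + volume.real (Ico 0 δ) := measureReal_union_le _ _
    _ = freeBoundaryTerm ℓ₂ t + δ := by rw [Real.volume_real_Ico_of_le hδ, sub_zero]

theorem min_le_freeBoundaryTerm_const : min t α ≤ freeBoundaryTerm (fun _ => α) t := by
  have hsub : Ico 0 (min t α) ⊆ freeBoundarySet (fun _ => α) t := fun s hs =>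
    ⟨⟨hs.1, hs.2.le.trans (min_le_left t α)⟩, hs.2.trans_le (min_le_right t α)⟩
  calc
    min t α ≤ volume.real (Ico 0 (min t α)) := by
      rw [Real.volume_real_Ico, sub_zero]
      exact le_max_left _ _
    _ ≤ freeBoundaryTerm (fun _ => α) t := measureReal_mono hsub volume_freeBoundarySet_ne_top

namespace IsFreeBoundarySubsolution

theorem mono (h : IsFreeBoundarySubsolution u ℓ) (huv : ∀ t ≥ 0, u t ≤ v t) :
    IsFreeBoundarySubsolution v ℓ :=
  fun t ht => (h t ht).trans (by gcongr; exact huv t ht)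

theorem sup (h₁ : IsFreeBoundarySubsolution u ℓ₁) (h₂ : IsFreeBoundarySubsolution u ℓ₂) :
    IsFreeBoundarySubsolution u (ℓ₁ ⊔ ℓ₂) := by
  have term_mono {ℓ ℓ' : ℝ → ℝ} (h : ℓ ≤ ℓ') (t : ℝ) :
      u t + freeBoundaryTerm ℓ t ≤ u t + freeBoundaryTerm ℓ' t := by
    gcongr
    exact freeBoundaryTerm_le_of_subset (freeBoundarySet_mono h)
  exact fun t ht => sup_le ((h₁ t ht).trans (term_mono le_sup_left t))
    ((h₂ t ht).trans (term_mono le_sup_right t))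

theorem const (hu_nonneg : ∀ t ≥ 0, 0 ≤ u t) (hu_pos : ∀ t ∈ Ico 0 α, α - t ≤ u t) :
    IsFreeBoundarySubsolution u fun _ => α := by
  intro t ht
  have hmin : min t α ≤ freeBoundaryTerm (fun _ => α) t := min_le_freeBoundaryTerm_const
  rcases lt_or_ge t α with htα | hαt
  · rw [min_eq_left htα.le] at hmin
    linarith [hu_pos t ⟨ht, htα⟩]
  · rw [min_eq_right hαt] at hmin
    linarith [hu_nonneg t ht]

theorem le_add_of_isSupersolution (h₁ : IsFreeBoundarySubsolution u ℓ₁)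
    (h₂ : IsFreeBoundarySupersolution u ℓ₂) (ht : 0 ≤ t) (hδ : 0 ≤ δ)
    (h : ∀ r ≥ 0, r ≤ t - δ → ℓ₁ r ≤ ℓ₂ r) : ℓ₁ t ≤ ℓ₂ t + δ := by
  linarith [h₁ t ht, h₂ t ht, freeBoundaryTerm_le_add hδ h]

theorem le_of_isSupersolution_of_le (h₁ : IsFreeBoundarySubsolution u ℓ₁)
    (h₂ : IsFreeBoundarySupersolution u ℓ₂) (hε : 0 < ε) (hℓ₁ : ∀ t ≥ 0, ε ≤ ℓ₁ t) :
    ∀ t ≥ 0, ℓ₁ t ≤ ℓ₂ t := by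
  refine forall_nonneg_of_forall_le_sub (half_pos hε) fun t ht ih => ?_
  have half_le : ∀ r ≥ 0, r ≤ t → ε / 2 ≤ ℓ₂ r := by
    intro r hr hrt
    have hle : ℓ₁ r ≤ ℓ₂ r + ε / 2 := h₁.le_add_of_isSupersolution h₂ hr (half_pos hε).le
      fun q hq hqr => ih q hq (hqr.trans (by gcongr))
    linarith [hℓ₁ r hr]
  calc
    ℓ₁ t ≤ u t + freeBoundaryTerm ℓ₁ t := h₁ t ht
    _ ≤ u t + freeBoundaryTerm ℓ₂ t := by
      gcongr
      exact freeBoundaryTerm_le_of_subset (freeBoundarySet_subset_of_le ih half_le)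
    _ ≤ ℓ₂ t := h₂ t ht

end IsFreeBoundarySubsolution

theorem mancala_freeBoundary_monotonicity_general (hα : 0 < α)
    (hℓ₁ : IsFreeBoundarySubsolution u ℓ₁) (hℓ₂ : IsFreeBoundarySupersolution v ℓ₂)
    (huv : ∀ t ≥ 0, u t ≤ v t) (hv_nonneg : ∀ t ≥ 0, 0 ≤ v t)
    (hv_pos : ∀ t ∈ Ico 0 α, α - t ≤ v t) : ∀ t ≥ 0, ℓ₁ t ≤ ℓ₂ t := by
  have hsup : IsFreeBoundarySubsolution v (ℓ₁ ⊔ fun _ => α) :=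
    (hℓ₁.mono huv).sup (.const hv_nonneg hv_pos)
  have hle := hsup.le_of_isSupersolution_of_le hℓ₂ hα fun _ _ => le_sup_right
  exact fun t ht => le_sup_left.trans (hle t ht)

end

/-- Monotonicity (comparison principle) for the free boundary:
if `u0₁ ≤ u0₂` then the corresponding solutions satisfy `ℓ₁ ≤ ℓ₂`. -/
theorem mancala_freeBoundary_monotonicity
    (u01 u02 : ℝ → ℝ)
    (hu01_nonneg : ∀ t ≥ (0 : ℝ), 0 ≤ u01 t)
    (hu02_nonneg : ∀ t ≥ (0 : ℝ), 0 ≤ u02 t)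
    (hu01_rc : ∀ t ≥ (0 : ℝ), ContinuousWithinAt u01 (Set.Ici t) t)
    (hu02_rc : ∀ t ≥ (0 : ℝ), ContinuousWithinAt u02 (Set.Ici t) t)
    (hu01_bv : ∀ a > (0 : ℝ), BoundedVariationOn u01 (Set.Icc 0 a))
    (hu02_bv : ∀ a > (0 : ℝ), BoundedVariationOn u02 (Set.Icc 0 a))
    (α : ℝ) (hα : 0 < α)
    (hu01_pos : ∀ t ∈ Set.Ico (0 : ℝ) α, α ≤ u01 t)
    (hu02_pos : ∀ t ∈ Set.Ico (0 : ℝ) α, α ≤ u02 t)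
    (ℓ₁ ℓ₂ : ℝ → ℝ)
    (hℓ₁ : ∀ t ≥ (0 : ℝ),
      ℓ₁ t = u01 t + (volume {s : ℝ | s ∈ Set.Icc 0 t ∧ ℓ₁ (t - s) > s}).toReal)
    (hℓ₂ : ∀ t ≥ (0 : ℝ),
      ℓ₂ t = u02 t + (volume {s : ℝ | s ∈ Set.Icc 0 t ∧ ℓ₂ (t - s) > s}).toReal)
    (h_le : ∀ t ≥ (0 : ℝ), u01 t ≤ u02 t) :
    ∀ t ≥ (0 : ℝ), ℓ₁ t ≤ ℓ₂ t :=
  mancala_freeBoundary_monotonicity_general hα (fun t ht => (hℓ₁ t ht).le)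
    (fun t ht => (hℓ₂ t ht).ge) h_le hu02_nonneg fun t ht => by linarith [hu02_pos t ht, ht.1]
end

section
/- Let u0 : [0,∞) → ℝ be nonnegative, right-continuous, of locally bounded variation, satisfying u0(t) ≥ α for all t ∈ [0,α) for some α > 0. Suppose w : {(τ,ξ) : 0 ≤ τ ≤ ξ} → [0,∞) is locally bounded, for every τ > 0 the right limit w(τ,τ) := lim_{ξ→τ⁺} w(τ,ξ) exists and is finite, and w(τ,ξ) = u0(ξ) + |{ s ∈ [0,τ] : w(s,s) + s > ξ }| for all 0 ≤ τ ≤ ξ. Let ℓ be the solution of the nonlocal free-boundary equation ℓ(t) = u0(t) + |{ s ∈ [0,t] : ℓ(t−s) > s }|. Then w(τ,ξ) = u0(ξ) + |{ s ∈ [0,τ] : ℓ(s) + s > ξ }| for all 0 ≤ τ ≤ ξ; in particular the integral solution is unique. -/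
open MeasureTheory Set Filter Topology

/-!
Both the diagonal `t ↦ w t t` and, after the reflection `s ↦ t - s`, the free boundary `ℓ` solve
`a t = u0 t + |{s ∈ [0, t] : a s + s > t}|`, so it suffices that this equation has one solution.

The measure on the right can never vanish at a time `T > 0`: otherwise almost every `s ∈ [0, T]`
has `a s + s ≤ T`, and computing the area of `{(s, t) : s < t < a s + s}` in both directions gives
`∫₀ᵀ a = ∫₀ᵀ (a - u0)`, contradicting `u0 ≥ α` on `[0, α)`. Hence a solution stays above some
`δ > 0` on each `[T, T + δ)`. If two solutions agree on `[0, T)`, then for `t ∈ [T, T + δ)` the sets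
on the right-hand side coincide, as every `s ∈ [T, t]` belongs to both, so agreement
propagates past `T`.
-/

lemma aemeasurable_restrict_of_locallyBoundedVariationOn {α : Type*} [LinearOrder α]
    [TopologicalSpace α] [OrderClosedTopology α] [SecondCountableTopology α]
    [MeasurableSpace α] [BorelSpace α] {μ : Measure α} {s : Set α} (hs : MeasurableSet s)
    {f : α → ℝ} (hf : LocallyBoundedVariationOn f s) : AEMeasurable f (μ.restrict s) := by
  obtain ⟨p, q, hp, hq, rfl⟩ := hf.exists_monotoneOn_sub_monotoneOn
  exact (aemeasurable_restrict_of_monotoneOn hs hp).sub (aemeasurable_restrict_of_monotoneOn hs hq)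

/-- Both sides are the area of the region between the graphs of `f` and `g`. -/
lemma lintegral_ofReal_sub_eq_lintegral_measure_between {β : Type*} [MeasurableSpace β]
    {μ : Measure β} [SFinite μ] {f g : β → ℝ} (hf : AEMeasurable f μ) (hg : AEMeasurable g μ) :
    ∫⁻ x, ENNReal.ofReal (g x - f x) ∂μ = ∫⁻ t : ℝ, μ {x | f x < t ∧ t < g x} := by
  calc ∫⁻ x, ENNReal.ofReal (g x - f x) ∂μ
      = ∫⁻ x, ENNReal.ofReal (hg.mk g x - hf.mk f x) ∂μ :=
        lintegral_congr_ae (by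
          filter_upwards [hf.ae_eq_mk, hg.ae_eq_mk] with x hfx hgx
          rw [hfx, hgx])
    _ = μ.prod volume (regionBetween (hf.mk f) (hg.mk g) univ) := by
        rw [volume_regionBetween_eq_lintegral' hf.measurable_mk hg.measurable_mk .univ,
          Measure.restrict_univ]
        rfl
    _ = ∫⁻ t, μ {x | hf.mk f x < t ∧ t < hg.mk g x} := by
        rw [Measure.prod_apply_symm
          (measurableSet_regionBetween hf.measurable_mk hg.measurable_mk .univ)]
        simp [regionBetween, preimage]
    _ = ∫⁻ t, μ {x | f x < t ∧ t < g x} :=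
        lintegral_congr fun t ↦ measure_congr <| eventuallyEq_set.2 <| by
          filter_upwards [hf.ae_eq_mk, hg.ae_eq_mk] with x hfx hgx
          simp only [hfx, hgx]

/-- The times `s ∈ [0, τ]` whose reach `a s + s` exceeds `ξ`; the integral equation evaluates
`|reachSet a τ ξ|` with `a s = w s s`. -/
def reachSet (a : ℝ → ℝ) (τ ξ : ℝ) : Set ℝ := {s | s ∈ Icc 0 τ ∧ a s + s > ξ}

section ReachSet

variable {a b : ℝ → ℝ} {T τ τ' ξ ξ' : ℝ}

lemma reachSet_subset_Icc : reachSet a τ ξ ⊆ Icc 0 τ := fun _ hs ↦ hs.1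

lemma measure_reachSet_ne_top : volume (reachSet a τ ξ) ≠ ⊤ :=
  measure_ne_top_of_subset reachSet_subset_Icc measure_Icc_lt_top.ne

lemma reachSet_mono (hτ : τ ≤ τ') (hξ : ξ' ≤ ξ) : reachSet a τ ξ ⊆ reachSet a τ' ξ' :=
  fun _ hs ↦ ⟨⟨hs.1.1, hs.1.2.trans hτ⟩, hξ.trans_lt hs.2⟩

lemma reachSet_congr (h : ∀ s ∈ Icc 0 τ, a s + s > ξ ↔ b s + s > ξ) :
    reachSet a τ ξ = reachSet b τ ξ :=
  ext fun s ↦ and_congr_right (h s)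

lemma monotone_sub_measureReal_reachSet (a : ℝ → ℝ) :
    Monotone fun t ↦ t - volume.real (reachSet a t t) := by
  intro x y hxy
  have hsub : reachSet a y y ⊆ reachSet a x x ∪ Icc x y := by
    rintro s ⟨⟨h0, hsy⟩, hs⟩
    rcases le_total s x with hsx | hxs
    · exact Or.inl ⟨⟨h0, hsx⟩, hxy.trans_lt hs⟩
    · exact Or.inr ⟨hxs, hsy⟩
  have hle : volume.real (reachSet a y y) ≤ volume.real (reachSet a x x) + (y - x) := calc
    _ ≤ volume.real (reachSet a x x ∪ Icc x y) :=
      measureReal_mono hsub (measure_union_ne_top measure_reachSet_ne_top measure_Icc_lt_top.ne)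
    _ ≤ volume.real (reachSet a x x) + volume.real (Icc x y) := measureReal_union_le _ _
    _ = _ := by rw [Real.volume_real_Icc_of_le hxy]
  dsimp only
  linarith

lemma measurable_measureReal_reachSet (a : ℝ → ℝ) :
    Measurable fun t ↦ volume.real (reachSet a t t) := by
  simpa only [id, sub_sub_cancel] using
    measurable_id.fun_sub (monotone_sub_measureReal_reachSet a).measurable

lemma exists_measure_reachSet_add_pos (h : volume (reachSet a τ ξ) ≠ 0) :
    ∃ ε > 0, 0 < volume (reachSet a τ (ξ + ε)) := by
  have hcover : reachSet a τ ξ ⊆ ⋃ n : ℕ, reachSet a τ (ξ + 1 / (n + 1)) := by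
    rintro s ⟨hs, hξ⟩
    obtain ⟨n, hn⟩ := exists_nat_one_div_lt (sub_pos.2 hξ)
    exact mem_iUnion.2 ⟨n, hs, lt_sub_iff_add_lt'.1 hn⟩
  obtain ⟨n, hn⟩ := exists_measure_pos_of_not_measure_iUnion_null
    fun h0 ↦ h (measure_mono_null hcover h0)
  exact ⟨1 / (n + 1), by positivity, hn⟩

lemma setLIntegral_ofReal_le_of_measure_reachSet_eq_zero
    (ha : AEMeasurable a (volume.restrict (Icc 0 T))) (hT : volume (reachSet a T T) = 0) :
    ∫⁻ s in Icc 0 T, ENNReal.ofReal (a s) ≤ ∫⁻ t in Icc 0 T, volume (reachSet a t t) := by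
  have hreach : ∀ᵐ s, s ∈ Icc 0 T → a s + s ≤ T := by
    filter_upwards [measure_eq_zero_iff_ae_notMem.1 hT] with s hs hsT
    exact not_lt.1 fun hlt ↦ hs ⟨hsT, hlt⟩
  calc ∫⁻ s in Icc 0 T, ENNReal.ofReal (a s)
      = ∫⁻ s in Icc 0 T, ENNReal.ofReal (a s + s - s) := by simp only [add_sub_cancel_right]
    _ = ∫⁻ t, volume.restrict (Icc 0 T) {s | s < t ∧ t < a s + s} :=
        lintegral_ofReal_sub_eq_lintegral_measure_between aemeasurable_id (ha.add aemeasurable_id)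
    _ ≤ ∫⁻ t, (Icc 0 T).indicator (fun t ↦ volume (reachSet a t t)) t := by
        refine lintegral_mono fun t ↦ ?_
        rw [Measure.restrict_apply' measurableSet_Icc]
        by_cases ht : t ∈ Icc 0 T
        · rw [indicator_of_mem ht]
          exact measure_mono fun s hs ↦ ⟨⟨hs.2.1, hs.1.1.le⟩, hs.1.2⟩
        · rw [indicator_of_notMem ht, nonpos_iff_eq_zero, measure_eq_zero_iff_ae_notMem]
          filter_upwards [hreach] with s hs hmem
          exact ht ⟨hmem.2.1.trans hmem.1.1.le, hmem.1.2.le.trans (hs hmem.2)⟩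
    _ = ∫⁻ t in Icc 0 T, volume (reachSet a t t) := lintegral_indicator measurableSet_Icc _

lemma measure_setOf_lt_comp_sub_left (a : ℝ → ℝ) (t : ℝ) :
    volume {s : ℝ | s ∈ Icc 0 t ∧ a (t - s) > s} = volume (reachSet a t t) := by
  have hreflect : {s : ℝ | s ∈ Icc 0 t ∧ a (t - s) > s} =
      MeasurableEquiv.subLeft t ⁻¹' reachSet a t t := by
    ext s
    change _ ↔ t - s ∈ Icc 0 t ∧ a (t - s) + (t - s) > t
    grind
  rw [hreflect, (Measure.measurePreserving_sub_left volume t).measure_preimage_equiv]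

end ReachSet

/-- The self-consistency equation `a t = u0 t + |{s ∈ [0, t] : a s + s > t}|` on `[0, ∞)`, satisfied
both by the diagonal of an integral solution and by the free boundary. -/
def IsBoundarySolution (u0 a : ℝ → ℝ) : Prop :=
  ∀ t ≥ (0 : ℝ), a t = u0 t + volume.real (reachSet a t t)

namespace IsBoundarySolution

variable {u0 a b : ℝ → ℝ} {α δ T : ℝ}

lemma aemeasurable_restrict (ha : IsBoundarySolution u0 a)
    (hmeas : AEMeasurable u0 (volume.restrict (Ici 0))) :
    AEMeasurable a (volume.restrict (Ici 0)) := by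
  refine (hmeas.add (measurable_measureReal_reachSet a).aemeasurable).congr ?_
  filter_upwards [ae_restrict_mem measurableSet_Ici] with t ht
  exact (ha t ht).symm

lemma setLIntegral_ofReal_eq (ha : IsBoundarySolution u0 a) (hnonneg : ∀ t ≥ (0 : ℝ), 0 ≤ u0 t)
    (T : ℝ) :
    ∫⁻ t in Icc 0 T, ENNReal.ofReal (a t) =
      (∫⁻ t in Icc 0 T, ENNReal.ofReal (u0 t)) + ∫⁻ t in Icc 0 T, volume (reachSet a t t) := by
  have hreach : Measurable fun t ↦ volume (reachSet a t t) := by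
    simpa only [ofReal_measureReal measure_reachSet_ne_top] using
      (measurable_measureReal_reachSet a).ennreal_ofReal
  rw [← lintegral_add_right _ hreach]
  refine setLIntegral_congr_fun measurableSet_Icc fun t ht ↦ ?_
  rw [ha t ht.1, ENNReal.ofReal_add (hnonneg t ht.1) measureReal_nonneg,
    ofReal_measureReal measure_reachSet_ne_top]

lemma setLIntegral_datum_eq_zero (ha : IsBoundarySolution u0 a)
    (hnonneg : ∀ t ≥ (0 : ℝ), 0 ≤ u0 t) (hmeas : AEMeasurable u0 (volume.restrict (Ici 0)))
    (hT : volume (reachSet a T T) = 0) : ∫⁻ t in Icc 0 T, ENNReal.ofReal (u0 t) = 0 := by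
  have hmeasT : AEMeasurable a (volume.restrict (Icc 0 T)) :=
    (ha.aemeasurable_restrict hmeas).mono_measure
      (Measure.restrict_mono_set volume Icc_subset_Ici_self)
  have hle := setLIntegral_ofReal_le_of_measure_reachSet_eq_zero hmeasT hT
  rw [ha.setLIntegral_ofReal_eq hnonneg] at hle
  have hfin : ∫⁻ t in Icc 0 T, volume (reachSet a t t) ≠ ⊤ := by
    refine (setLIntegral_lt_top_of_le_nnreal measure_Icc_lt_top.ne ⟨T.toNNReal, fun t ht ↦ ?_⟩).ne
    calc volume (reachSet a t t) ≤ volume (Icc 0 T) :=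
          measure_mono (reachSet_subset_Icc.trans (Icc_subset_Icc_right ht.2))
      _ = T.toNNReal := by rw [Real.volume_Icc, sub_zero]; rfl
  by_contra hne
  exact hle.not_gt (add_comm (lintegral _ _) _ ▸ ENNReal.lt_add_right hfin hne)

lemma measure_reachSet_ne_zero (ha : IsBoundarySolution u0 a)
    (hnonneg : ∀ t ≥ (0 : ℝ), 0 ≤ u0 t) (hmeas : AEMeasurable u0 (volume.restrict (Ici 0)))
    (hα : 0 < α) (hpos : ∀ t ∈ Ico (0 : ℝ) α, α ≤ u0 t) (hT : 0 < T) :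
    volume (reachSet a T T) ≠ 0 := by
  intro hnull
  have hbound : ENNReal.ofReal α * volume (Ico 0 (min α T)) ≤ 0 := calc
    _ = ∫⁻ _ in Ico 0 (min α T), ENNReal.ofReal α := (setLIntegral_const _ _).symm
    _ ≤ ∫⁻ t in Ico 0 (min α T), ENNReal.ofReal (u0 t) :=
      setLIntegral_mono' measurableSet_Ico fun t ht ↦
        ENNReal.ofReal_le_ofReal (hpos t ⟨ht.1, ht.2.trans_le (min_le_left _ _)⟩)
    _ ≤ ∫⁻ t in Icc 0 T, ENNReal.ofReal (u0 t) :=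
      lintegral_mono_set fun t ht ↦ ⟨ht.1, ht.2.le.trans (min_le_right _ _)⟩
    _ = 0 := ha.setLIntegral_datum_eq_zero hnonneg hmeas hnull
  simp [Real.volume_Ico, hα.not_ge, hT.not_ge] at hbound

lemma exists_pos_forall_Ico_le (ha : IsBoundarySolution u0 a)
    (hnonneg : ∀ t ≥ (0 : ℝ), 0 ≤ u0 t) (hmeas : AEMeasurable u0 (volume.restrict (Ici 0)))
    (hα : 0 < α) (hpos : ∀ t ∈ Ico (0 : ℝ) α, α ≤ u0 t) (hT : 0 ≤ T) :
    ∃ δ > 0, ∀ t ∈ Ico T (T + δ), δ ≤ a t := by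
  rcases hT.eq_or_lt with rfl | hT
  · refine ⟨α, hα, fun t ht ↦ ?_⟩
    rw [zero_add] at ht
    rw [ha t ht.1]
    exact (hpos t ht).trans (le_add_of_nonneg_right measureReal_nonneg)
  · obtain ⟨ε, hε, hεpos⟩ := exists_measure_reachSet_add_pos
      (ha.measure_reachSet_ne_zero hnonneg hmeas hα hpos hT)
    refine ⟨min ε (volume.real (reachSet a T (T + ε))),
      lt_min hε (ENNReal.toReal_pos hεpos.ne' measure_reachSet_ne_top), fun t ht ↦ ?_⟩
    have ht0 : 0 ≤ t := hT.le.trans ht.1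
    have htε : t ≤ T + ε := ht.2.le.trans (add_le_add_right (min_le_left _ _) T)
    calc min ε (volume.real (reachSet a T (T + ε)))
        ≤ volume.real (reachSet a T (T + ε)) := min_le_right _ _
      _ ≤ volume.real (reachSet a t t) :=
          measureReal_mono (reachSet_mono ht.1 htε) measure_reachSet_ne_top
      _ ≤ a t := by rw [ha t ht0]; exact le_add_of_nonneg_left (hnonneg t ht0)

lemma eqOn_Ico_add (ha : IsBoundarySolution u0 a) (hb : IsBoundarySolution u0 b)
    (hT : 0 ≤ T) (hab : EqOn a b (Ico 0 T)) (hδa : ∀ t ∈ Ico T (T + δ), δ ≤ a t)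
    (hδb : ∀ t ∈ Ico T (T + δ), δ ≤ b t) : EqOn a b (Ico T (T + δ)) := by
  intro t ht
  rw [ha t (hT.trans ht.1), hb t (hT.trans ht.1), reachSet_congr]
  intro s hs
  rcases lt_or_ge s T with hsT | hTs
  · rw [hab ⟨hs.1, hsT⟩]
  · have hsδ : s ∈ Ico T (T + δ) := ⟨hTs, hs.2.trans_lt ht.2⟩
    have has := hδa s hsδ
    have hbs := hδb s hsδ
    have htδ := ht.2
    exact iff_of_true (by linarith) (by linarith)

theorem eqOn_Ici (ha : IsBoundarySolution u0 a) (hb : IsBoundarySolution u0 b)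
    (hnonneg : ∀ t ≥ (0 : ℝ), 0 ≤ u0 t) (hmeas : AEMeasurable u0 (volume.restrict (Ici 0)))
    (hα : 0 < α) (hpos : ∀ t ∈ Ico (0 : ℝ) α, α ≤ u0 t) : EqOn a b (Ici 0) := by
  by_contra hne
  let S : Set ℝ := {t | 0 ≤ t ∧ a t ≠ b t}
  have hS : S.Nonempty := by
    by_contra! hempty
    exact hne fun t ht ↦ not_not.1 fun h ↦ hempty.subset ⟨ht, h⟩
  have hbdd : BddBelow S := ⟨0, fun t ht ↦ ht.1⟩
  have hT : 0 ≤ sInf S := le_csInf hS fun t ht ↦ ht.1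
  have hbefore : EqOn a b (Ico 0 (sInf S)) := fun t ht ↦
    not_not.1 fun h ↦ notMem_of_lt_csInf ht.2 hbdd ⟨ht.1, h⟩
  obtain ⟨δ, hδ, hδa⟩ := ha.exists_pos_forall_Ico_le hnonneg hmeas hα hpos hT
  obtain ⟨ε, hε, hεb⟩ := hb.exists_pos_forall_Ico_le hnonneg hmeas hα hpos hT
  have hafter : EqOn a b (Ico (sInf S) (sInf S + min δ ε)) :=
    ha.eqOn_Ico_add hb hT hbefore
      (fun t ht ↦ (min_le_left _ _).trans
        (hδa t ⟨ht.1, ht.2.trans_le (add_le_add_right (min_le_left _ _) _)⟩))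
      (fun t ht ↦ (min_le_right _ _).trans
        (hεb t ⟨ht.1, ht.2.trans_le (add_le_add_right (min_le_right _ _) _)⟩))
  obtain ⟨t, htS, ht⟩ := exists_lt_of_csInf_lt hS (lt_add_of_pos_right _ (lt_min hδ hε))
  exact htS.2 (hafter ⟨csInf_le hbdd htS, ht⟩)

end IsBoundarySolution

theorem mancala_integralSolution_uniqueness_general
    (u0 : ℝ → ℝ)
    (hu0_nonneg : ∀ t ≥ (0 : ℝ), 0 ≤ u0 t)
    (hu0_meas : AEMeasurable u0 (volume.restrict (Ici 0)))
    (α : ℝ) (hα : 0 < α)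
    (hu0_pos : ∀ t ∈ Ico (0 : ℝ) α, α ≤ u0 t)
    (w : ℝ → ℝ → ℝ)
    (hw_eq : ∀ τ ξ : ℝ, 0 ≤ τ → τ ≤ ξ →
      w τ ξ = u0 ξ + (volume {s : ℝ | s ∈ Icc 0 τ ∧ w s s + s > ξ}).toReal)
    (ℓ : ℝ → ℝ)
    (hℓ : ∀ t ≥ (0 : ℝ),
      ℓ t = u0 t + (volume {s : ℝ | s ∈ Icc 0 t ∧ ℓ (t - s) > s}).toReal) :
    ∀ τ ξ : ℝ, 0 ≤ τ → τ ≤ ξ →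
      w τ ξ = u0 ξ + (volume {s : ℝ | s ∈ Icc 0 τ ∧ ℓ s + s > ξ}).toReal := by
  have hw_diag : IsBoundarySolution u0 fun t ↦ w t t := fun t ht ↦ hw_eq t t ht le_rfl
  have hℓ_sol : IsBoundarySolution u0 ℓ := fun t ht ↦ by
    rw [hℓ t ht, measure_setOf_lt_comp_sub_left, measureReal_def]
  have hdiag : EqOn (fun t ↦ w t t) ℓ (Ici 0) :=
    hw_diag.eqOn_Ici hℓ_sol hu0_nonneg hu0_meas hα hu0_pos
  have hreach (τ ξ : ℝ) : reachSet (fun t ↦ w t t) τ ξ = reachSet ℓ τ ξ :=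
    reachSet_congr fun s hs ↦ by rw [show w s s = ℓ s from hdiag hs.1]
  intro τ ξ hτ hξ
  exact (hw_eq τ ξ hτ hξ).trans (congrArg (fun S ↦ u0 ξ + volume.real S) (hreach τ ξ))

/-- Uniqueness of the integral solution: any locally bounded
nonnegative `w` on the octant `{0 ≤ τ ≤ ξ}` whose right trace on the diagonal
exists (equals `w(τ,τ)`) and which satisfies the integral equation must coincide
with the solution reconstructed from the free boundary `ℓ`. -/
theorem mancala_integralSolution_uniqueness
    (u0 : ℝ → ℝ)
    (hu0_nonneg : ∀ t ≥ (0 : ℝ), 0 ≤ u0 t)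
    (hu0_rc : ∀ t ≥ (0 : ℝ), ContinuousWithinAt u0 (Set.Ici t) t)
    (hu0_bv : ∀ a > (0 : ℝ), BoundedVariationOn u0 (Set.Icc 0 a))
    (α : ℝ) (hα : 0 < α)
    (hu0_pos : ∀ t ∈ Set.Ico (0 : ℝ) α, α ≤ u0 t)
    (w : ℝ → ℝ → ℝ)
    (hw_nonneg : ∀ τ ξ : ℝ, 0 ≤ τ → τ ≤ ξ → 0 ≤ w τ ξ)
    (hw_locbdd : ∀ R > (0 : ℝ), ∃ C : ℝ, ∀ τ ξ : ℝ,
      0 ≤ τ → τ ≤ ξ → ξ ≤ R → |w τ ξ| ≤ C)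
    (hw_trace : ∀ τ > (0 : ℝ),
      Tendsto (fun ξ => w τ ξ) (𝓝[>] τ) (𝓝 (w τ τ)))
    (hw_eq : ∀ τ ξ : ℝ, 0 ≤ τ → τ ≤ ξ →
      w τ ξ = u0 ξ + (volume {s : ℝ | s ∈ Set.Icc 0 τ ∧ w s s + s > ξ}).toReal)
    (ℓ : ℝ → ℝ)
    (hℓ : ∀ t ≥ (0 : ℝ),
      ℓ t = u0 t + (volume {s : ℝ | s ∈ Set.Icc 0 t ∧ ℓ (t - s) > s}).toReal) :
    ∀ τ ξ : ℝ, 0 ≤ τ → τ ≤ ξ →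
      w τ ξ = u0 ξ + (volume {s : ℝ | s ∈ Set.Icc 0 τ ∧ ℓ s + s > ξ}).toReal := by
  have hu0_lbv : LocallyBoundedVariationOn u0 (Ici 0) := fun _ b _ hb ↦
    (hu0_bv (b + 1) (by linarith [mem_Ici.1 hb])).mono fun x hx ↦
      ⟨hx.1, by linarith [hx.2.2]⟩
  exact mancala_integralSolution_uniqueness_general u0 hu0_nonneg
    (aemeasurable_restrict_of_locallyBoundedVariationOn measurableSet_Ici hu0_lbv)
    α hα hu0_pos w hw_eq ℓ hℓ
end
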